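/- Let p be an odd prime and s a positive integer with p^s ≡ 1 (mod 3), and let m = (p^s - 1)/3 or m = p^s - 1. Then, modulo p^{s+4}, sum_{k=0}^{m} (6k+1) (1/3)_k^6 / (k!)^6 ≡ ((2/3)_{(p^s-1)/3}^3 / (1)_{(p^s-1)/3}^3) * ( p^s + p^{3s} * sum_{j=1}^{(p^s-1)/3} ( 1/(3j-1)^2 - 1/(3j)^2 ) ). -/

import Mathlib

open Finset

/-- Rising factorial `(x)_k = x(x+1)⋯(x+k-1)`. -/
def poch (x : ℚ) (k : ℕ) : ℚ := ∏ i ∈ Finset.range k, (x + i)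

/-- `a ≡ b (mod p^m)`: the `p`-adic valuation of `a - b` is at least `m`. -/
def pcong (p : ℕ) (m : ℕ) (a b : ℚ) : Prop :=
  a = b ∨ (m : ℤ) ≤ padicValRat p (a - b)

/-- Generalized harmonic number `H_m^{(ℓ)} = ∑_{k=1}^m 1/k^ℓ`. -/
def harm (m ℓ : ℕ) : ℚ := ∑ k ∈ Finset.Icc 1 m, 1 / (k : ℚ) ^ ℓ


lemma poch_zero (x : ℚ) : poch x 0 = 1 := by simp [poch]

lemma poch_succ (x : ℚ) (k : ℕ) : poch x (k + 1) = poch x k * (x + k) := by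
  simp [poch, Finset.prod_range_succ]

lemma poch_succ' (x : ℚ) (k : ℕ) : poch x (k + 1) = x * poch (x + 1) k := by
  unfold poch
  rw [Finset.prod_range_succ']
  rw [mul_comm]
  congr 1
  · simp
  · apply Finset.prod_congr rfl
    intro i _
    push_cast; ring

lemma poch_shift (x : ℚ) (k : ℕ) : poch x k * (x + k) = x * poch (x + 1) k := by
  rw [← poch_succ, poch_succ']

lemma poch_add (x : ℚ) (m k : ℕ) : poch x (m + k) = poch x m * poch (x + m) k := by
  unfold poch
  rw [Finset.prod_range_add]
  congr 1
  apply Finset.prod_congr rfl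
  intro i _
  push_cast; ring

lemma poch_reflect (x : ℚ) (k : ℕ) : poch x k = (-1) ^ k * poch (1 - x - k) k := by
  unfold poch
  have h0 : ((-1 : ℚ)) ^ k = ∏ _i ∈ Finset.range k, (-1 : ℚ) := by simp
  rw [← Finset.prod_range_reflect, h0, ← Finset.prod_mul_distrib]
  apply Finset.prod_congr rfl
  intro i hi
  have h : i + 1 ≤ k := Finset.mem_range.mp hi
  have : ((k - 1 - i : ℕ) : ℚ) = k - 1 - i := by
    rw [Nat.cast_sub (by omega), Nat.cast_sub (by omega)]; simp
  rw [this]; ring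

lemma poch_ne_zero (x : ℚ) (k : ℕ) (h : ∀ i < k, x + (i : ℚ) ≠ 0) : poch x k ≠ 0 := by
  unfold poch
  exact Finset.prod_ne_zero_iff.mpr fun i hi => h i (Finset.mem_range.mp hi)

lemma poch_one (k : ℕ) : poch 1 k = (k.factorial : ℚ) := by
  induction k with
  | zero => simp [poch]
  | succ k ih => rw [poch_succ, ih, Nat.factorial_succ]; push_cast; ring

/-- three-adic nonvanishing -/
lemma third_ne (c : ℤ) (h : ¬ (3 : ℤ) ∣ c) (k : ℚ) (z : ℤ) (hk : k = z) : (c : ℚ) / 3 + k ≠ 0 := by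
  intro h0
  apply h
  refine ⟨-z, ?_⟩
  have : (c : ℚ) = 3 * (-z : ℤ) := by push_cast; rw [hk] at h0; linarith
  exact_mod_cast this

lemma poch13_ne (k : ℕ) : poch (1/3) k ≠ 0 := poch_ne_zero _ _ fun i _ => by positivity
lemma poch23_ne (k : ℕ) : poch (2/3) k ≠ 0 := poch_ne_zero _ _ fun i _ => by positivity
lemma poch43_ne (k : ℕ) : poch (4/3) k ≠ 0 := poch_ne_zero _ _ fun i _ => by positivity

def FF (N k : ℕ) : ℚ :=
  poch (2/3) (N - k) * poch (1/3) k * poch (4/3) N /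
    ((N.factorial : ℚ) * (k.factorial : ℚ) * poch (4/3) (N - k))

def ff (N k : ℕ) : ℚ := (3 * N + 1 - 6 * k) * FF N k ^ 3

lemma FF_N (M k : ℕ) : FF (M + k) k * ((3 * M + 2) * (3 * (M + k) + 4)) =
    FF (M + k + 1) k * ((3 * M + 4) * (3 * (M + k + 1))) := by
  unfold FF
  have h1 : M + k - k = M := by omega
  have h2 : M + k + 1 - k = M + 1 := by omega
  rw [h1, h2, poch_succ, poch_succ, poch_succ, Nat.factorial_succ]
  have := poch43_ne M
  have := Nat.factorial_ne_zero (M + k)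
  have := Nat.factorial_ne_zero k
  have : (4/3 + (M : ℚ)) ≠ 0 := by positivity
  have : ((M : ℚ) + k + 1) ≠ 0 := by positivity
  push_cast
  field_simp
  ring

lemma FF_k (M k : ℕ) : FF (M + k + 1) (k + 1) * ((3 * k + 3) * (3 * M + 2)) =
    FF (M + k + 1) k * ((3 * k + 1) * (3 * M + 4)) := by
  unfold FF
  have h1 : M + k + 1 - (k + 1) = M := by omega
  have h2 : M + k + 1 - k = M + 1 := by omega
  rw [h1, h2, poch_succ (2/3), poch_succ (1/3), poch_succ (4/3) M, Nat.factorial_succ k]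
  have := poch43_ne M
  have := Nat.factorial_ne_zero (M + k + 1)
  have := Nat.factorial_ne_zero k
  have : (4/3 + (M : ℚ)) ≠ 0 := by positivity
  have : ((k : ℚ) + 1) ≠ 0 := by positivity
  push_cast
  field_simp
  ring

def GG (N k : ℕ) : ℚ := (6 * N + 8 - 3 * k) * (3 * k / (3 * N + 4) * FF (N + 1) k) ^ 3

lemma wz1 (M k : ℕ) : ff (M + k + 1) k - ff (M + k) k = GG (M + k) (k + 1) - GG (M + k) k := by
  unfold ff GG
  have e1 : FF (M + k) k = FF (M + k + 1) k * (((3 * M + 4) * (3 * (M + k + 1))) /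
      ((3 * M + 2) * (3 * (M + k) + 4))) := by
    rw [mul_div_assoc', eq_div_iff (by positivity), FF_N]
  have e2 : FF (M + k + 1) (k + 1) = FF (M + k + 1) k * (((3 * k + 1) * (3 * M + 4)) /
      ((3 * k + 3) * (3 * M + 2))) := by
    rw [mul_div_assoc', eq_div_iff (by positivity), FF_k]
  rw [e1, e2]
  generalize FF (M + k + 1) k = F
  have h1 : (3 * (M : ℚ) + 2) ≠ 0 := by positivity
  have h2 : (3 * ((M : ℚ) + k) + 4) ≠ 0 := by positivity
  have h3 : ((k : ℚ) + 1) ≠ 0 := by positivity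
  push_cast
  field_simp
  ring

lemma wz_end (N : ℕ) : ff (N + 1) (N + 1) + GG N (N + 1) =
    (6 * ((N + 1 : ℕ) : ℚ) + 1) * poch (1 / 3) (N + 1) ^ 6 / (((N + 1).factorial : ℕ) : ℚ) ^ 6 := by
  have hF : FF (N + 1) (N + 1) = poch (1/3) (N + 1) ^ 2 / ((N + 1).factorial : ℚ) ^ 2 * (3 * N + 4) := by
    unfold FF
    have h := poch_shift (1/3) (N + 1)
    have h' : poch (4/3) (N + 1) = poch (1/3) (N + 1) * (3 * N + 4) := by
      norm_num at h; push_cast at h; linarith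
    rw [h', Nat.sub_self, poch_zero, poch_zero]
    have := Nat.factorial_ne_zero (N + 1)
    field_simp
  unfold ff GG
  rw [hF]
  have := Nat.factorial_ne_zero (N + 1)
  have h2 : (3 * (N : ℚ) + 4) ≠ 0 := by positivity
  push_cast
  field_simp
  ring

theorem bailey (N : ℕ) : ∑ k ∈ Finset.range (N + 1),
    (6 * (k : ℚ) + 1) * poch (1 / 3) k ^ 6 / (k.factorial : ℚ) ^ 6 =
    ∑ k ∈ Finset.range (N + 1), ff N k := by
  induction N with
  | zero => simp [ff, FF, poch]
  | succ N ih =>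
    rw [Finset.sum_range_succ, ih, Finset.sum_range_succ (fun k => ff (N + 1) k), ← wz_end]
    have : ∑ k ∈ Finset.range (N + 1), (ff (N + 1) k - ff N k) = GG N (N + 1) - GG N 0 := by
      rw [← Finset.sum_range_sub]
      apply Finset.sum_congr rfl
      intro k hk
      have hk := Finset.mem_range.mp hk
      obtain ⟨M, rfl⟩ : ∃ M, N = M + k := ⟨N - k, by omega⟩
      exact wz1 M k
    rw [Finset.sum_sub_distrib] at this
    have h0 : GG N 0 = 0 := by simp [GG]
    linarith

/-- general form of `FF` -/
lemma FF_eq (N k : ℕ) (hk : k ≤ N) : FF N k = poch (2/3) N / (N.factorial : ℚ) *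
    (poch (-1/3 - N) k * poch (1/3) k / ((k.factorial : ℚ) * poch (1/3 - N) k)) := by
  obtain ⟨M, rfl⟩ : ∃ M, N = M + k := ⟨N - k, by omega⟩
  unfold FF
  have h1 : M + k - k = M := by omega
  rw [h1, poch_add (4/3), poch_add (2/3), poch_reflect (4/3 + M), poch_reflect (2/3 + M)]
  have a1 : (1 - (4/3 + (M : ℚ)) - k) = (-1/3 - (M + k : ℕ)) := by push_cast; ring
  have a2 : (1 - (2/3 + (M : ℚ)) - k) = (1/3 - (M + k : ℕ)) := by push_cast; ring
  rw [a1, a2]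
  have : poch (1/3 - (M + k : ℕ)) k ≠ 0 := poch_ne_zero _ _ fun i _ => by
    have := third_ne 1 (by norm_num) (i - (M + k : ℕ)) (i - (M + k : ℕ)) (by push_cast; ring)
    intro h; apply this; rw [← h]; push_cast; ring
  have := poch43_ne M
  have := Nat.factorial_ne_zero (M + k)
  have := Nat.factorial_ne_zero k
  generalize poch (1/3 - (M + k : ℕ)) k = y at *
  generalize poch (-1/3 - (M + k : ℕ)) k = x at *
  field_simp

def DW (a b c d e : ℚ) (n k : ℕ) : ℚ :=
  (a + 2 * k) / a * (poch a k * poch b k * poch c k * poch d k * poch e k * poch (-n) k /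
    ((k.factorial : ℚ) * poch (1 + a - b) k * poch (1 + a - c) k * poch (1 + a - d) k *
      poch (1 + a - e) k * poch (1 + a + n) k))

def DR (a b c d : ℚ) (n : ℕ) : ℚ :=
  poch (1 + a) n * poch (1 + a - b - c) n * poch (1 + a - b - d) n * poch (1 + a - c - d) n /
    (poch (1 + a - b) n * poch (1 + a - c) n * poch (1 + a - d) n * poch (1 + a - b - c - d) n)

def DZ (a b c d e : ℚ) (n k : ℕ) : ℚ :=
  poch a k * poch b k * poch c k * poch d k * poch e k * poch (-n - 1) k /
    ((k.factorial : ℚ) * poch (1 + a - b) k * poch (1 + a - c) k * poch (1 + a - d) k *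
      poch (1 + a - e) k * poch (1 + a + n) k)

lemma DW1 (a b c d e : ℚ) (n k : ℕ) :
    DW a b c d e n k = (a + 2 * k) / a * DZ a b c d e n k * ((n + 1 - k) / (n + 1)) := by
  unfold DW DZ
  have h := poch_shift (-n - 1) k
  have h2 : poch (-(n : ℚ)) k = poch (-n - 1) k * ((n + 1 - k) / (n + 1)) := by
    have : (n : ℚ) + 1 ≠ 0 := by positivity
    rw [show (-(n : ℚ) - 1 + 1) = -n by ring] at h
    field_simp
    linarith
  rw [h2]; ring

lemma DW2 (a b c d e : ℚ) (n k : ℕ) (he : e ≠ 0) (hae : a - e ≠ 0)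
    (hae' : a - e + k ≠ 0) (h1 : 1 + a + n ≠ 0) (h1k : 1 + a + n + k ≠ 0) :
    DW a b c d (e + 1) (n + 1) k = (a + 2 * k) / a * DZ a b c d e n k *
      ((e + k) / e * ((a - e + k) / (a - e)) * ((1 + a + n) / (1 + a + n + k))) := by
  unfold DW DZ
  have e1 : poch (e + 1) k = poch e k * ((e + k) / e) := by
    have := poch_shift e k
    field_simp; linarith
  have e2 : poch (1 + a - (e + 1)) k = poch (1 + a - e) k * ((a - e) / (a - e + k)) := by
    have := poch_shift (a - e) k
    rw [show 1 + a - (e + 1) = a - e by ring, show 1 + a - e = a - e + 1 by ring]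
    field_simp; linarith
  have e3 : poch (1 + a + (n + 1 : ℕ)) k = poch (1 + a + n) k * ((1 + a + n + k) / (1 + a + n)) := by
    have := poch_shift (1 + a + n) k
    push_cast
    rw [show 1 + a + ((n : ℚ) + 1) = 1 + a + n + 1 by ring]
    field_simp; linarith
  rw [e1, e2, e3]
  push_cast
  rw [show -((n : ℚ) + 1) = -n - 1 by ring]
  simp only [div_eq_mul_inv, mul_inv, inv_inv]
  ring

lemma DZ_succ (a b c d e : ℚ) (n k : ℕ) (hb : 1 + a - b + k ≠ 0) (hc : 1 + a - c + k ≠ 0)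
    (hd : 1 + a - d + k ≠ 0) (he : 1 + a - e + k ≠ 0) (h1k : 1 + a + n + k ≠ 0) :
    DZ a b c d e n (k + 1) * ((k + 1) * (1 + a - b + k) * (1 + a - c + k) * (1 + a - d + k) *
      (1 + a - e + k)) =
    DZ a b c d e n k * ((a + k) * (b + k) * (c + k) * (d + k) * (e + k) * (k - n - 1) /
      (1 + a + n + k)) := by
  unfold DZ
  simp only [poch_succ, Nat.factorial_succ]
  have : ((k : ℚ) + 1) ≠ 0 := by positivity
  push_cast
  generalize poch (1 + a - b) k = x1
  generalize poch (1 + a - c) k = x2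
  generalize poch (1 + a - d) k = x3
  generalize poch (1 + a - e) k = x4
  generalize poch (1 + a + n) k = x5
  generalize (k.factorial : ℚ) = x6
  rw [mul_comm ((k : ℚ) + 1) x6]
  have key : ∀ (P Q : ℚ), P / (x6 * (k + 1) * (x1 * (1 + a - b + k)) * (x2 * (1 + a - c + k)) *
      (x3 * (1 + a - d + k)) * (x4 * (1 + a - e + k)) * (x5 * (1 + a + n + k))) *
      ((k + 1) * (1 + a - b + k) * (1 + a - c + k) * (1 + a - d + k) * (1 + a - e + k)) =
      P / (x6 * x1 * x2 * x3 * x4 * x5) / (1 + a + n + k) := by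
    intro P Q
    field_simp
  rw [key _ 0]
  ring

def DG (a b c d e : ℚ) (n k : ℕ) : ℚ :=
  (e + n + 1) * (1 + a + n) / (e * (1 + a - b + n) * (1 + a - c + n) * (1 + a - d + n) *
    (1 + a - b - c - d + n)) / a / (n + 1) *
    (k * (k + a - b) * (k + a - c) * (k + a - d) * (k + a - e)) * DZ a b c d e n k

set_option maxHeartbeats 2000000 in
lemma dougall_key (a b c d n' k' : ℚ) :
    (a + 2 * k') * (((1 + 2 * a - b - c - d + n' + k') * (-(1 + a - b - c - d + n') + k')) * (-1) *
      ((n' + 1) * (1 + a - b + n') * (1 + a - c + n') * (1 + a - d + n'))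
     - (1 + 2 * a - b - c - d + n') * (1 + a - b - c + n') * (1 + a - b - d + n') *
      (1 + a - c - d + n') * (n' + 1 - k') * (1 + a + n' + k')) =
     (1 + 2 * a - b - c - d + n' + n' + 1) * ((a + k') * (b + k') * (c + k') * (d + k') *
      (1 + 2 * a - b - c - d + n' + k') * (k' - n' - 1) -
       (k' * (k' + a - b) * (k' + a - c) * (k' + a - d) * (k' + a - (1 + 2 * a - b - c - d + n'))) *
        (1 + a + n' + k')) := by
  ring

lemma dougall_abs (A2 a e ek xk X P Q N1 NK B C D R1 R2 R3 E1 L1 L2 Z : ℚ)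
    (ha : a ≠ 0) (he : e ≠ 0) (hX : X ≠ 0) (hQ : Q ≠ 0) (hN : N1 ≠ 0) (hB : B ≠ 0) (hC : C ≠ 0)
    (hD : D ≠ 0)
    (key : A2 * ((ek * xk) * (-1) * (N1 * B * C * D) - e * R1 * R2 * R3 * NK * Q) =
      E1 * (L1 - L2 * Q)) :
    A2 / a * Z * (ek / e * (xk / (-X)) * (P / Q)) -
      P * R1 * R2 * R3 / (B * C * D * X) * (A2 / a * Z * (NK / N1)) =
      E1 * P / (e * B * C * D * X) / a / N1 * (Z * (L1 / Q)) -
      E1 * P / (e * B * C * D * X) / a / N1 * L2 * Z := by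
  field_simp
  linear_combination Z * P * key

set_option maxHeartbeats 2000000 in
lemma dougall_step (a b c d : ℚ) (n k : ℕ) (ha : a ≠ 0) (h1 : ∀ j : ℕ, 1 + a + j ≠ 0)
    (hb : ∀ j : ℕ, 1 + a - b + j ≠ 0) (hc : ∀ j : ℕ, 1 + a - c + j ≠ 0)
    (hd : ∀ j : ℕ, 1 + a - d + j ≠ 0) (hbcd : ∀ j : ℕ, b + c + d - a + 1 ≠ j)
    (he : ∀ j : ℕ, 1 + 2 * a - b - c - d + j ≠ 0) (hk : k ≤ n + 1) (e : ℚ)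
    (hee : e = 1 + 2 * a - b - c - d + n) :
    DW a b c d (e + 1) (n + 1) k - (1 + a + n) * (1 + a - b - c + n) * (1 + a - b - d + n) *
      (1 + a - c - d + n) / ((1 + a - b + n) * (1 + a - c + n) * (1 + a - d + n) *
      (1 + a - b - c - d + n)) * DW a b c d e n k = DG a b c d e n (k + 1) - DG a b c d e n k := by
  have he0 : e ≠ 0 := by rw [hee]; exact he n
  have hae : a - e ≠ 0 := by
    intro h; apply hbcd (n + 2); push_cast; rw [hee] at h; linarith
  obtain ⟨m, hm⟩ : ∃ m, n + 1 = k + m := ⟨n + 1 - k, by omega⟩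
  have hm' : (n : ℚ) + 1 = k + m := by exact_mod_cast hm
  have haek : a - e + k ≠ 0 := by
    intro h; apply hbcd (m + 1); push_cast; rw [hee] at h; linarith
  have haek1 : 1 + a - e + k ≠ 0 := by
    intro h; apply hbcd m; rw [hee] at h; linarith
  have h1k : 1 + a + n + k ≠ 0 := by have := h1 (n + k); push_cast at this; rwa [← add_assoc] at this
  have hn : (n : ℚ) + 1 ≠ 0 := by positivity
  have hx : 1 + a - b - c - d + n ≠ 0 := by
    intro h; apply hae; rw [hee]; linarith
  rw [DW2 a b c d e n k he0 hae haek (h1 n) h1k, DW1]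
  have hz := DZ_succ a b c d e n k (hb k) (hc k) (hd k) haek1 h1k
  have hg : DG a b c d e n (k + 1) = (e + n + 1) * (1 + a + n) / (e * (1 + a - b + n) * (1 + a - c + n) * (1 + a - d + n) *
    (1 + a - b - c - d + n)) / a / (n + 1) * (DZ a b c d e n k * ((a + k) * (b + k) * (c + k) * (d + k) * (e + k) * (k - n - 1) /
      (1 + a + n + k))) := by
    rw [← hz]; unfold DG; push_cast; ring
  rw [hg]; unfold DG
  generalize DZ a b c d e n k = Z
  have hb' := hb n
  have hc' := hc n
  have hd' := hd n
  have hae2 : a - e = -(1 + a - b - c - d + n) := by rw [hee]; ring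
  rw [hae2]
  clear hz hg hb hc hd he hbcd h1 hae haek haek1 hm hm'
  have hd2 : d = 1 + 2 * a - b - c + n - e := by rw [hee]; ring
  generalize (n : ℚ) = n' at *
  generalize (k : ℚ) = k' at *
  exact dougall_abs _ _ _ _ _ _ _ _ _ _ _ _ _ _ _ _ _ _ _ _ ha he0 hx h1k hn hb' hc' hd'
    (by rw [hee]; exact dougall_key a b c d n' k')

theorem dougall (a b c d : ℚ) (n : ℕ) (ha : a ≠ 0) (h1 : ∀ j : ℕ, 1 + a + j ≠ 0)
    (hb : ∀ j : ℕ, 1 + a - b + j ≠ 0) (hc : ∀ j : ℕ, 1 + a - c + j ≠ 0)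
    (hd : ∀ j : ℕ, 1 + a - d + j ≠ 0) (hbcd : ∀ j : ℕ, b + c + d - a + 1 ≠ j)
    (he : ∀ j : ℕ, 1 + 2 * a - b - c - d + j ≠ 0) :
    ∑ k ∈ Finset.range (n + 1), DW a b c d (1 + 2 * a - b - c - d + n) n k = DR a b c d n := by
  induction n with
  | zero => simp [DW, DR, poch, ha]
  | succ n ih =>
    have hs : ∑ k ∈ Finset.range (n + 1 + 1), (DW a b c d (1 + 2 * a - b - c - d + n + 1) (n + 1) k -
      (1 + a + n) * (1 + a - b - c + n) * (1 + a - b - d + n) *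
      (1 + a - c - d + n) / ((1 + a - b + n) * (1 + a - c + n) * (1 + a - d + n) *
      (1 + a - b - c - d + n)) * DW a b c d (1 + 2 * a - b - c - d + n) n k) =
      DG a b c d (1 + 2 * a - b - c - d + n) n (n + 1 + 1) -
      DG a b c d (1 + 2 * a - b - c - d + n) n 0 := by
      rw [← Finset.sum_range_sub]
      apply Finset.sum_congr rfl
      intro k hk
      have hk := Finset.mem_range.mp hk
      exact dougall_step a b c d n k ha h1 hb hc hd hbcd he (by omega) _ rfl
    have g0 : DG a b c d (1 + 2 * a - b - c - d + n) n 0 = 0 := by simp [DG]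
    have g1 : DG a b c d (1 + 2 * a - b - c - d + n) n (n + 1 + 1) = 0 := by
      have : poch (-n - 1) (n + 1 + 1) = 0 := by
        rw [poch_succ]; push_cast; ring
      simp [DG, DZ, this]
    have w0 : DW a b c d (1 + 2 * a - b - c - d + n) n (n + 1) = 0 := by
      have : poch (-n) (n + 1) = 0 := by
        rw [poch_succ]; ring
      simp [DW, this]
    rw [g0, g1, Finset.sum_sub_distrib, ← Finset.mul_sum, Finset.sum_range_succ (fun k => DW a b c d (1 + 2 * a - b - c - d + n) n k),
      w0, ih] at hs
    push_cast
    rw [← add_assoc]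
    have : DR a b c d (n + 1) = (1 + a + n) * (1 + a - b - c + n) * (1 + a - b - d + n) *
      (1 + a - c - d + n) / ((1 + a - b + n) * (1 + a - c + n) * (1 + a - d + n) *
      (1 + a - b - c - d + n)) * DR a b c d n := by
      unfold DR; simp only [poch_succ, div_eq_mul_inv, mul_inv]; ring
    rw [this]; linarith

/-- `VV p r x`: the `p`-adic valuation of `x` is at least `r`. -/
def VV (p r : ℕ) (x : ℚ) : Prop := padicNorm p x ≤ ((p : ℚ) ^ r)⁻¹

section vv
variable {p : ℕ} [hpf : Fact p.Prime]

lemma VV.add {r : ℕ} {x y : ℚ} (hx : VV p r x) (hy : VV p r y) : VV p r (x + y) :=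
  le_trans padicNorm.nonarchimedean (max_le hx hy)

lemma VV.neg {r : ℕ} {x : ℚ} (hx : VV p r x) : VV p r (-x) := by
  unfold VV; rw [padicNorm.neg]; exact hx

lemma VV.sub {r : ℕ} {x y : ℚ} (hx : VV p r x) (hy : VV p r y) : VV p r (x - y) := by
  rw [sub_eq_add_neg]; exact hx.add hy.neg

lemma VV.zero {r : ℕ} : VV p r 0 := by
  unfold VV; simp

lemma VV.mul {r t : ℕ} {x y : ℚ} (hx : VV p r x) (hy : VV p t y) : VV p (r + t) (x * y) := by
  unfold VV at *
  rw [padicNorm.mul, pow_add, mul_inv]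
  have := padicNorm.nonneg (p := p) y
  gcongr

lemma VV.mono {r t : ℕ} (h : t ≤ r) {x : ℚ} (hx : VV p r x) : VV p t x := by
  unfold VV at *
  refine hx.trans ?_
  have : (1 : ℚ) ≤ p := by exact_mod_cast hpf.out.one_lt.le
  gcongr

lemma VV.mul0 {r : ℕ} {x y : ℚ} (hx : VV p r x) (hy : VV p 0 y) : VV p r (x * y) := hx.mul hy

lemma VV.mul0' {r : ℕ} {x y : ℚ} (hx : VV p 0 x) (hy : VV p r y) : VV p r (x * y) := by
  rw [mul_comm]; exact hy.mul hx

lemma VV.int (z : ℤ) : VV p 0 z := by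
  unfold VV; simpa using padicNorm.of_int (p := p) z

lemma VV.nat (z : ℕ) : VV p 0 z := by
  exact_mod_cast VV.int (p := p) z

lemma VV.one : VV p 0 1 := by exact_mod_cast VV.nat (p := p) 1

lemma VV.ofNat (n : ℕ) [n.AtLeastTwo] : VV p 0 (OfNat.ofNat n : ℚ) := by
  exact_mod_cast VV.nat (p := p) (OfNat.ofNat n)

lemma VV.ppow (r : ℕ) : VV p r ((p : ℚ) ^ r) := by
  unfold VV
  have h : padicNorm p (p : ℚ) = (p : ℚ)⁻¹ := padicNorm.padicNorm_p_of_prime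
  have : padicNorm p ((p : ℚ) ^ r) = ((p : ℚ)⁻¹) ^ r := by
    induction r with
    | zero => simp
    | succ r ih => rw [pow_succ, padicNorm.mul, ih, h, pow_succ]
  rw [this, inv_pow]

lemma VV.pow {r : ℕ} {x : ℚ} (hx : VV p r x) (m : ℕ) : VV p (r * m) (x ^ m) := by
  induction m with
  | zero => simpa using VV.one
  | succ m ih => rw [pow_succ, Nat.mul_succ]; exact ih.mul hx

lemma VV.sum {ι : Type*} {r : ℕ} (S : Finset ι) (f : ι → ℚ) (h : ∀ i ∈ S, VV p r (f i)) :
    VV p r (∑ i ∈ S, f i) := by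
  classical
  induction S using Finset.induction_on with
  | empty => simpa using VV.zero
  | insert a S ha ih =>
    rw [Finset.sum_insert ha]
    exact (h a (by simp)).add (ih fun i hi => h i (by simp [hi]))

lemma VV.prod {ι : Type*} (S : Finset ι) (f : ι → ℚ) (h : ∀ i ∈ S, VV p 0 (f i)) :
    VV p 0 (∏ i ∈ S, f i) := by
  classical
  induction S using Finset.induction_on with
  | empty => simpa using VV.one
  | insert a S ha ih =>
    rw [Finset.prod_insert ha]
    exact (h a (by simp)).mul0 (ih fun i hi => h i (by simp [hi]))

lemma VV.div_int {r : ℕ} {x : ℚ} (hx : VV p r x) (z : ℤ) (hz : ¬ (p : ℤ) ∣ z) :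
    VV p r (x / z) := by
  unfold VV at *
  rw [padicNorm.div, padicNorm.int_eq_one_iff (p := p) z |>.mpr hz, div_one]; exact hx

lemma VV.div_nat {r : ℕ} {x : ℚ} (hx : VV p r x) (z : ℕ) (hz : ¬ p ∣ z) :
    VV p r (x / z) := by
  have := hx.div_int (z : ℤ) (by exact_mod_cast hz)
  exact_mod_cast this

lemma VV.norm_one {u : ℚ} (hu : VV p 1 (u - 1)) : padicNorm p u = 1 := by
  have h1 : padicNorm p (u - 1) < padicNorm p 1 := by
    unfold VV at hu
    refine lt_of_le_of_lt hu ?_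
    rw [padicNorm.one, pow_one]
    apply inv_lt_one_of_one_lt₀
    exact_mod_cast hpf.out.one_lt
  have := padicNorm.add_eq_max_of_ne (p := p) (q := u - 1) (r := 1) h1.ne
  rw [sub_add_cancel, max_eq_right h1.le, padicNorm.one] at this
  exact this

lemma VV.ne_zero {u : ℚ} (hu : VV p 1 (u - 1)) : u ≠ 0 := by
  rintro rfl
  have := hu.norm_one
  simp at this

lemma VV.div_unit {r : ℕ} {x u : ℚ} (hx : VV p r x) (hu : VV p 1 (u - 1)) : VV p r (x / u) := by
  unfold VV at *
  rw [padicNorm.div, VV.norm_one hu, div_one]; exact hx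

lemma VV.qdiv (s : ℕ) (z : ℤ) (hz : ¬ (p : ℤ) ^ s ∣ z) : VV p 1 ((p : ℚ) ^ s / z) := by
  have hp0 : (p : ℚ) ≠ 0 := by exact_mod_cast hpf.out.ne_zero
  have hz0 : z ≠ 0 := by rintro rfl; simp at hz
  have hfin : FiniteMultiplicity (p : ℤ) z := by
    rw [Int.finiteMultiplicity_iff]
    exact ⟨by simpa using hpf.out.ne_one, hz0⟩
  obtain ⟨c, hc, hcd⟩ := hfin.exists_eq_pow_mul_and_not_dvd
  set v := multiplicity (p : ℤ) z
  have hv : v < s := by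
    by_contra hcon
    push Not at hcon
    exact hz (hc ▸ Dvd.dvd.mul_right (pow_dvd_pow _ hcon) c)
  have hzz : (z : ℚ) = (p : ℚ) ^ v * c := by rw [hc]; push_cast; ring
  have hc0 : (c : ℚ) ≠ 0 := by
    intro h; apply hcd; have : c = 0 := by exact_mod_cast h
    simp [this]
  have e : (p : ℚ) ^ s / z = (p : ℚ) ^ (s - v) / c := by
    rw [hzz, div_eq_div_iff (by positivity) hc0]
    have : (p : ℚ) ^ s = (p : ℚ) ^ (s - v) * (p : ℚ) ^ v := by rw [← pow_add]; congr 1; omega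
    rw [this]; ring
  rw [e]
  exact ((VV.ppow (p := p) (s - v)).div_int c hcd).mono (by omega)

lemma VV.prod1 {r : ℕ} {ι : Type*} (S : Finset ι) (t : ι → ℚ) (h : ∀ i ∈ S, VV p r (t i)) :
    VV p r (∏ i ∈ S, (1 + t i) - 1) := by
  classical
  induction S using Finset.induction_on with
  | empty => simpa using VV.zero
  | insert a S ha ih =>
    have h1 := ih fun i hi => h i (by simp [hi])
    have h2 := h a (by simp)
    rw [Finset.prod_insert ha]
    have : (1 + t a) * ∏ i ∈ S, (1 + t i) - 1 =
      (∏ i ∈ S, (1 + t i) - 1) + t a * (∏ i ∈ S, (1 + t i) - 1) + t a := by ring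
    rw [this]
    exact (h1.add ((h2.mul h1).mono (by omega))).add h2

lemma VV.prod2 {r : ℕ} {ι : Type*} (S : Finset ι) (t : ι → ℚ) (h : ∀ i ∈ S, VV p r (t i)) :
    VV p (2 * r) (∏ i ∈ S, (1 + t i) - 1 - ∑ i ∈ S, t i) := by
  classical
  induction S using Finset.induction_on with
  | empty => simpa using VV.zero
  | insert a S ha ih =>
    have h1 := ih fun i hi => h i (by simp [hi])
    have h3 := VV.prod1 S t fun i hi => h i (by simp [hi])
    have h2 := h a (by simp)
    rw [Finset.prod_insert ha, Finset.sum_insert ha]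
    have : (1 + t a) * ∏ i ∈ S, (1 + t i) - 1 - (t a + ∑ i ∈ S, t i) =
      (∏ i ∈ S, (1 + t i) - 1 - ∑ i ∈ S, t i) + t a * (∏ i ∈ S, (1 + t i) - 1) := by ring
    rw [this]
    exact h1.add ((h2.mul h3).mono (by omega))

def cc (x : ℚ) (k : ℕ) : ℚ := poch x k / (k.factorial : ℚ)

lemma cc_zero (x : ℚ) : cc x 0 = 1 := by simp [cc, poch]

lemma cc_succ' (x : ℚ) (k : ℕ) : cc x (k + 1) = x / (k + 1 : ℕ) * cc (x + 1) k := by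
  unfold cc; rw [poch_succ', Nat.factorial_succ]; push_cast
  have := Nat.factorial_ne_zero k
  field_simp

lemma cc_pascal (x : ℚ) (k : ℕ) : cc x (k + 1) = cc (x + 1) (k + 1) - cc (x + 1) k := by
  unfold cc
  rw [poch_succ', poch_succ, Nat.factorial_succ]; push_cast
  have := Nat.factorial_ne_zero k
  have : (k : ℚ) + 1 ≠ 0 := by positivity
  field_simp
  ring

/-- integrality for `x` near a nonpositive integer -/
lemma cc_near (K : ℕ) (δ : ℚ) (hδ : ∀ k ≤ K, VV p 0 (δ / (k.factorial : ℚ))) (y : ℕ) :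
    ∀ k ≤ K, VV p 0 (cc (δ - y) k) := by
  have hδ0 : VV p 0 δ := by simpa using hδ 0 (by omega)
  induction y with
  | zero =>
    intro k hk
    cases k with
    | zero => rw [cc_zero]; exact VV.one
    | succ k =>
      have : cc (δ - (0 : ℕ)) (k + 1) = δ / ((k + 1).factorial : ℚ) * poch (δ + 1) k := by
        unfold cc; rw [poch_succ']; push_cast; rw [sub_zero]; ring
      rw [this]
      refine (hδ _ hk).mul0 ?_
      unfold poch
      exact VV.prod _ _ fun i _ => (hδ0.add VV.one).add (VV.nat i)
  | succ y ih =>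
    intro k hk
    cases k with
    | zero => rw [cc_zero]; exact VV.one
    | succ k =>
      rw [cc_pascal]
      have : δ - (y + 1 : ℕ) + 1 = δ - y := by push_cast; ring
      rw [this]
      exact (ih _ hk).sub (ih _ (by omega))

lemma exists_factorial (k : ℕ) : ∃ K : ℕ, VV p 0 ((p : ℚ) ^ K / (k.factorial : ℚ)) := by
  refine ⟨k.factorial, ?_⟩
  have h := VV.qdiv (p := p) k.factorial (k.factorial : ℤ) (by
    intro h
    have h' : p ^ k.factorial ∣ k.factorial := by exact_mod_cast h
    have := Nat.le_of_dvd (Nat.factorial_pos k) h'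
    exact absurd (Nat.lt_pow_self hpf.out.one_lt (n := k.factorial)) (by omega))
  have h2 := h.mono (t := 0) (by omega)
  rwa [Int.cast_natCast] at h2

/-- integrality of the binomial coefficients of `a / 3`. -/
lemma cc_int (hp3 : ¬ p ∣ 3) (a : ℤ) (k : ℕ) : VV p 0 (cc (a / 3) k) := by
  choose f hf using fun k => exists_factorial (p := p) k
  set K := ∑ j ∈ Finset.range (k + 1), f j with hK
  have hK' : ∀ j ≤ k, f j ≤ K := fun j hj =>
    Finset.single_le_sum (f := f) (fun _ _ => Nat.zero_le _) (Finset.mem_range.mpr (by omega))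
  have hcop : IsCoprime (3 : ℤ) ((p : ℤ) ^ K) := by
    apply IsCoprime.pow_right
    rw [Int.isCoprime_iff_gcd_eq_one]
    have := (Nat.Prime.coprime_iff_not_dvd hpf.out).mpr hp3
    have h2 : Nat.gcd 3 p = 1 := this.symm
    exact_mod_cast h2
  obtain ⟨u, v, huv⟩ := hcop
  -- a = 3ua + p^K va
  set Q : ℤ := (p : ℤ) ^ K with hQ
  have hQpos : 0 < Q := by have := hpf.out.pos; positivity
  set y : ℤ := (-(u * a)) % Q with hy
  have hy0 : 0 ≤ y := Int.emod_nonneg _ hQpos.ne'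
  obtain ⟨w, hw⟩ : ∃ w, -(u * a) = y + Q * w := ⟨_, (Int.emod_add_mul_ediv _ _).symm⟩
  obtain ⟨y', hy'⟩ := Int.eq_ofNat_of_zero_le hy0
  have hx : (a : ℚ) / 3 = ((p : ℚ) ^ K * ((v * a - 3 * w : ℤ) : ℚ) / (3 : ℕ)) - (y' : ℕ) := by
    have e1 : (a : ℚ) = 3 * (u * a) + Q * v * a := by
      have : a = (u * 3 + v * Q) * a := by rw [huv, one_mul]
      have h2 : a = 3 * (u * a) + Q * v * a := by linarith
      exact_mod_cast h2
    have e2 : -((u : ℚ) * a) = y' + Q * w := by rw [hy'] at hw; exact_mod_cast hw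
    have e3 : (Q : ℚ) = (p : ℚ) ^ K := by rw [hQ]; push_cast; ring
    rw [← e3]; push_cast
    linarith
  rw [hx]
  refine cc_near k _ ?_ y' k le_rfl
  intro j hj
  have e : (p : ℚ) ^ K * ((v * a - 3 * w : ℤ) : ℚ) / (3 : ℕ) / (j.factorial : ℚ) =
    ((p : ℚ) ^ (f j) / (j.factorial : ℚ)) * ((p : ℚ) ^ (K - f j) * ((v * a - 3 * w : ℤ) : ℚ)) / (3 : ℕ) := by
    have : (p : ℚ) ^ K = (p : ℚ) ^ (f j) * (p : ℚ) ^ (K - f j) := by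
      rw [← pow_add]; congr 1; have := hK' j hj; omega
    rw [this]; ring
  rw [e]
  refine VV.div_nat ((hf j).mul0 (VV.mul0 ?_ (VV.int _))) 3 hp3
  exact (VV.ppow _).mono (by omega)

/-- congruence of binomial coefficients mod `p` -/
lemma cc_congr (s : ℕ) (δ : ℚ) (hδ : ∀ k : ℕ, 0 < k → k < p ^ s → VV p 1 (δ / k))
    (hi : ∀ k, VV p 0 (cc (δ + 1) k)) (y : ℕ) :
    ∀ k < p ^ s, VV p 1 (cc (δ - y) k - cc (-y) k) := by
  induction y with
  | zero =>
    intro k hk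
    cases k with
    | zero => rw [cc_zero, cc_zero, sub_self]; exact VV.zero
    | succ k =>
      have h0 : cc (-((0 : ℕ) : ℚ)) (k + 1) = 0 := by rw [cc_succ']; simp
      rw [h0, sub_zero, Nat.cast_zero, sub_zero, cc_succ']
      exact (hδ _ (by omega) hk).mul0 (hi k)
  | succ y ih =>
    intro k hk
    cases k with
    | zero => rw [cc_zero, cc_zero, sub_self]; exact VV.zero
    | succ k =>
      rw [cc_pascal, cc_pascal (-((y + 1 : ℕ) : ℚ))]
      have e1 : δ - (y + 1 : ℕ) + 1 = δ - y := by push_cast; ring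
      have e2 : -((y + 1 : ℕ) : ℚ) + 1 = -y := by push_cast; ring
      rw [e1, e2]
      have := (ih _ hk).sub (ih k (by omega))
      convert this using 1
      ring

lemma cc_neg_eq_zero (y k : ℕ) (h : y < k) : cc (-y) k = 0 := by
  unfold cc poch
  rw [Finset.prod_eq_zero (Finset.mem_range.mpr h) (by ring), zero_div]

/-- `∏ (1 - (δ/(x+i))²)` -/
def PP (x δ : ℚ) (k : ℕ) : ℚ := ∏ i ∈ Finset.range k, (1 + -(δ / (x + i)) ^ 2)

lemma PP_eq (x δ : ℚ) (k : ℕ) (h : ∀ i < k, x + (i : ℚ) ≠ 0) :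
    poch (x - δ) k * poch (x + δ) k = poch x k ^ 2 * PP x δ k := by
  unfold poch PP
  rw [← Finset.prod_mul_distrib, ← Finset.prod_pow, ← Finset.prod_mul_distrib]
  apply Finset.prod_congr rfl
  intro i hi
  have := h i (Finset.mem_range.mp hi)
  field_simp
  ring

lemma PP_unit (x δ : ℚ) (k : ℕ) (h : ∀ i < k, VV p 1 (δ / (x + i))) : VV p 2 (PP x δ k - 1) :=
  VV.prod1 _ _ fun i hi => ((h i (Finset.mem_range.mp hi)).pow 2).neg

lemma PP_exp (x δ : ℚ) (k : ℕ) (h : ∀ i < k, VV p 1 (δ / (x + i))) :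
    VV p 4 (PP x δ k - (1 - ∑ i ∈ Finset.range k, (δ / (x + i)) ^ 2)) := by
  have := VV.prod2 (p := p) (r := 2) (Finset.range k) (fun i => -(δ / (x + i)) ^ 2)
    fun i hi => ((h i (Finset.mem_range.mp hi)).pow 2).neg
  rw [Finset.sum_neg_distrib] at this
  convert this using 1
  unfold PP; ring

lemma quot_unit {r : ℕ} (hr : 1 ≤ r) {x y : ℚ} (hx : VV p r (x - 1)) (hy : VV p r (y - 1)) : VV p r (x / y - 1) := by
  have hy1 : VV p 1 (y - 1) := hy.mono hr
  have : x / y - 1 = ((x - 1) - (y - 1)) / y := by have := hy1.ne_zero; field_simp; ring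
  rw [this]; exact (hx.sub hy).div_unit hy1

lemma quot_exp {x y a b : ℚ} (ha : VV p 2 a) (hb : VV p 2 b) (hx : VV p 4 (x - (1 - a)))
    (hy : VV p 4 (y - (1 - b))) : VV p 4 (x / y - (1 - a + b)) := by
  have hy1 : VV p 1 (y - 1) := by
    have := (hy.mono (t := 1) (by omega)).sub (hb.mono (t := 1) (by omega))
    convert this using 1; ring
  have : x / y - (1 - a + b) = ((x - (1 - a)) - (y - (1 - b)) * (1 - a + b) + (b * b - a * b)) / y := by
    have := hy1.ne_zero; field_simp; ring
  rw [this]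
  refine VV.div_unit ?_ hy1
  have h0 : VV p 0 (1 - a + b) := (VV.one.sub (ha.mono (by omega))).add (hb.mono (by omega))
  exact (hx.sub (hy.mul0 h0)).add ((hb.mul hb).sub (ha.mul hb))

end vv

section main
variable {p : ℕ} [hpf : Fact p.Prime]

lemma poch_mulu (x d : ℚ) (k : ℕ) (h : ∀ i < k, x + (i : ℚ) ≠ 0) :
    poch (x + d) k = poch x k * ∏ i ∈ Finset.range k, (1 + d / (x + i)) := by
  unfold poch
  rw [← Finset.prod_mul_distrib]
  apply Finset.prod_congr rfl
  intro i hi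
  have := h i (Finset.mem_range.mp hi)
  field_simp
  ring

lemma notdvd (n : ℕ) (z : ℤ) (h1 : -3 * (3 * n + 1) < z) (h2 : z < 3 * (3 * n + 1)) (h0 : z ≠ 0)
    (h3 : z ≠ 3 * n + 1) (h4 : z ≠ -(3 * n + 1)) (h5 : z ≠ 2 * (3 * n + 1)) (h6 : z ≠ -2 * (3 * n + 1)) :
    ¬ ((3 * n + 1 : ℤ)) ∣ z := by
  rintro ⟨c, rfl⟩
  have hq : (0 : ℤ) < 3 * n + 1 := by positivity
  have hc1 : -3 < c := by nlinarith
  have hc2 : c < 3 := by nlinarith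
  interval_cases c <;> omega

lemma Qdiv {n s : ℕ} (hq : p ^ s = 3 * n + 1) (x : ℚ) (z : ℤ) (hx : x = z)
    (hz : ¬ ((3 * n + 1 : ℤ)) ∣ z) : VV p 1 ((3 * n + 1) / x) := by
  have e : (p : ℤ) ^ s = 3 * n + 1 := by exact_mod_cast hq
  have e' : (p : ℚ) ^ s = 3 * n + 1 := by exact_mod_cast hq
  have := VV.qdiv (p := p) s z (by rw [e]; exact hz)
  rw [e'] at this; rw [hx]; exact this

lemma Qd3 {n s : ℕ} (hq : p ^ s = 3 * n + 1) (x : ℚ) (z : ℤ) (hx : 3 * x = z)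
    (hz : ¬ ((3 * n + 1 : ℤ)) ∣ z) : VV p 1 ((n + 1 / 3) / x) := by
  have := Qdiv hq (3 * x) z hx hz
  convert this using 1
  rw [← mul_div_mul_left _ x (three_ne_zero)]
  congr 1; ring

lemma QVV {n s : ℕ} (hq : p ^ s = 3 * n + 1) : VV p s (3 * n + 1 : ℚ) := by
  have e' : (p : ℚ) ^ s = 3 * n + 1 := by exact_mod_cast hq
  rw [← e']; exact VV.ppow s

lemma three_not {n s : ℕ} (hq : p ^ s = 3 * n + 1) (hs : 0 < s) : ¬ p ∣ 3 := by
  intro h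
  have h3 : p = 3 := (Nat.prime_dvd_prime_iff_eq hpf.out Nat.prime_three).mp h
  subst h3
  have : 3 ∣ 3 ^ s := dvd_pow_self 3 hs.ne'
  omega

lemma FF_alt (M k : ℕ) : FF (M + k) k = cc (2/3) M * cc (-1/3 - (M + k : ℕ)) k *
    (poch (1/3) k / poch (-(M + k : ℕ)) k) := by
  unfold FF cc
  have h1 : M + k - k = M := by omega
  have hf : ((M + k).factorial : ℚ) = M.factorial * ((-1) ^ k * poch (-(M + k : ℕ)) k) := by
    rw [← poch_one, ← poch_one, poch_add, poch_reflect (1 + M)]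
    congr 3; push_cast; ring
  rw [h1, poch_add (4/3), poch_reflect (4/3 + M), hf]
  have a1 : (1 - (4/3 + (M : ℚ)) - k) = (-1/3 - (M + k : ℕ)) := by push_cast; ring
  rw [a1]
  have h4 := poch43_ne M
  have h5 : ((-1 : ℚ)) ^ k ≠ 0 := by simp
  generalize poch (-(M + k : ℕ) : ℚ) k = y
  field_simp

/-- key divisibility in case 1 -/
lemma ff1_bound {n s : ℕ} (hq : p ^ s = 3 * n + 1) (hs : 0 < s) (k : ℕ) (hk : 1 ≤ k) (hkn : k ≤ n) :
    VV p (s + 2) (ff n k) := by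
  have hp3 := three_not hq hs
  obtain ⟨M, rfl⟩ : ∃ M, n = M + k := ⟨n - k, by omega⟩
  obtain ⟨k, rfl⟩ : ∃ k', k = k' + 1 := ⟨k - 1, by omega⟩
  set n := M + (k + 1) with hn
  have hx : (-(n : ℚ)) = 1/3 + (-(n + 1/3)) := by ring
  have hne : ∀ i < k + 1, (1/3 : ℚ) + (i : ℚ) ≠ 0 := fun i _ => by positivity
  set u := ∏ i ∈ Finset.range (k + 1), (1 + (-(n + 1/3 : ℚ)) / (1/3 + i)) with hu
  have hu1 : VV p 1 (u - 1) := by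
    apply VV.prod1
    intro i hi
    have hi' := Finset.mem_range.mp hi
    rw [neg_div]
    refine (Qd3 hq _ (3 * i + 1) (by push_cast; ring) ?_).neg
    apply notdvd <;> omega
  have hF : FF n (k + 1) = (-(1 / (3 : ℕ)) * (cc (2/3) M * cc ((2 - 3 * n : ℤ) / 3) k) / u) *
      ((3 * n + 1) / (k + 1 : ℕ)) := by
    rw [hn, FF_alt, ← hn, hx, poch_mulu _ _ _ hne, cc_succ', ← hu]
    have h13 := poch13_ne (k + 1)
    have := hu1.ne_zero
    have e : (-1/3 - (n : ℚ) + 1) = ((2 - 3 * n : ℤ) : ℚ) / 3 := by push_cast; ring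
    rw [e]
    generalize cc ((2 - 3 * n : ℤ) / 3) k = w
    generalize cc (2 / 3) M = w'
    push_cast
    field_simp
    ring
  set J := (-(1 / (3 : ℕ)) * (cc (2/3) M * cc ((2 - 3 * n : ℤ) / 3) k) / u) with hJ
  have hJV : VV p 0 J := by
    refine VV.div_unit (VV.mul0 (VV.one.div_nat 3 hp3).neg (VV.mul0 ?_ ?_)) hu1
    · have := cc_int hp3 2 M
      rw [Int.cast_ofNat] at this; exact this
    · exact cc_int hp3 _ k
  have hqk : VV p 1 ((3 * n + 1 : ℚ) / (k + 1 : ℕ)) :=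
    Qdiv hq _ (k + 1 : ℕ) (by push_cast; ring) (by apply notdvd <;> omega)
  have : ff n (k + 1) = (3 * n + 1) * ((3 * n + 1 : ℚ) / (k + 1 : ℕ)) ^ 2 *
      (((3 * n + 1 : ℚ) / (k + 1 : ℕ) - 6) * J ^ 3) := by
    unfold ff
    rw [hF]
    push_cast
    field_simp
  rw [this]
  refine VV.mul0 ((QVV hq).mul (hqk.pow 2)) (VV.mul0 ((hqk.mono (by omega)).sub (VV.ofNat 6)) ?_)
  exact hJV.pow 3

lemma ff1_dw (n k : ℕ) (hk : k ≤ n) :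
    ff n k * (PP (1/3) (n + 1/3) k / PP (1/3 - n) (n + 1/3) k) =
    (3 * n + 1) * (poch (2/3) n / (n.factorial : ℚ)) ^ 3 *
      DW (-1/3 - n) (-1/3 - n) (-1/3 - n) (1/3) (1 + 2 * (-1/3 - n) - (-1/3 - n) - (-1/3 - n) - 1/3 + n) n k := by
  have h1 := PP_eq (1/3) (n + 1/3) k (fun i _ => by positivity)
  have h2 := PP_eq (1/3 - n) (n + 1/3) k (fun i _ => by
    have := third_ne 1 (by norm_num) (-(n : ℚ) + i) (-n + i) (by push_cast; ring)
    push_cast at this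
    intro h; apply this; rw [← h]; ring)
  unfold ff DW
  rw [FF_eq n k hk]
  have e1 : (1 + 2 * (-1/3 - n) - (-1/3 - n) - (-1/3 - n) - 1/3 + n : ℚ) = 1/3 + (n + 1/3) := by ring
  have e2 : (-(n : ℚ)) = 1/3 - (n + 1/3) := by ring
  have e3 : (1 + (-1/3 - n) - (1/3 + (n + 1/3)) : ℚ) = 1/3 - n - (n + 1/3) := by ring
  have e4 : (1 + (-1/3 - n) + n : ℚ) = 1/3 - n + (n + 1/3) := by ring
  have e5 : (1 + (-1/3 - n) - (-1/3 - n) : ℚ) = 1 := by ring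
  have e6 : (1 + (-1/3 - n) - 1/3 : ℚ) = 1/3 - n := by ring
  rw [e1, e3, e4, e5, e6, e2, poch_one]
  have e7 : (3 * n + 1 - 6 * k : ℚ) = (3 * n + 1) * ((-1/3 - n + 2 * k) / (-1/3 - n)) := by
    have : (-1/3 - n : ℚ) ≠ 0 := by have : (0 : ℚ) ≤ n := by positivity
                                    intro h; linarith
    rw [mul_div_assoc', eq_div_iff this]; ring
  rw [e7]
  have h1' : ∀ X Y Z : ℚ, X * poch (1/3 + (n + 1/3)) k * poch (1/3 - (n + 1/3)) k =
      X * (poch (1/3) k ^ 2 * PP (1/3) (n + 1/3) k) := by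
    intro X Y Z; rw [← h1]; ring
  have h2' : ∀ X : ℚ, X * poch (1/3 - n - (n + 1/3)) k * poch (1/3 - n + (n + 1/3)) k =
      X * (poch (1/3 - n) k ^ 2 * PP (1/3 - n) (n + 1/3) k) := by
    intro X; rw [← h2]; ring
  rw [h1' _ 0 0, h2']
  ring

lemma DR1 (n : ℕ) : DR (-1/3 - n) (-1/3 - n) (-1/3 - n) (1/3) n =
    PP 1 (n + 1/3) n / PP (2/3) (n + 1/3) n := by
  have h1 := PP_eq 1 (n + 1/3) n (fun i _ => by positivity)
  have h2 := PP_eq (2/3) (n + 1/3) n (fun i _ => by positivity)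
  unfold DR
  have e1 : (1 + (-1/3 - n) : ℚ) = 1 - (n + 1/3) := by ring
  rw [e1]
  have e2 : (1 - (n + 1/3) - (-1/3 - n) - (-1/3 - n) : ℚ) = 1 + (n + 1/3) := by ring
  have e3 : (1 - (n + 1/3) - (-1/3 - n) - 1/3 : ℚ) = 2/3 := by ring
  have e4 : (1 - (n + 1/3) - (-1/3 - n) : ℚ) = 1 := by ring
  have e5 : (1 - (n + 1/3) - 1/3 : ℚ) = 2/3 - (n + 1/3) := by ring
  have e6 : (1 - (n + 1/3) - (-1/3 - n) - (-1/3 - n) - 1/3 : ℚ) = 2/3 + (n + 1/3) := by ring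
  rw [e6, e2, e3, e4, e5, h1, mul_assoc (poch 1 n * poch 1 n), h2]
  have := poch23_ne n
  have h6 : poch 1 n ≠ 0 := by rw [poch_one]; positivity
  field_simp

end main

section main2
variable {p : ℕ} [hpf : Fact p.Prime]

def TA (n : ℕ) : ℚ := ∑ i ∈ Finset.range n, ((n + 1/3 : ℚ) / (2/3 + i)) ^ 2
def TB (n : ℕ) : ℚ := ∑ i ∈ Finset.range n, ((n + 1/3 : ℚ) / (1 + i)) ^ 2

lemma d23 {n s : ℕ} (hq : p ^ s = 3 * n + 1) (i : ℕ) (hi : i < n) :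
    VV p 1 ((n + 1/3 : ℚ) / (2/3 + i)) :=
  Qd3 hq _ (3 * i + 2) (by push_cast; ring) (by apply notdvd <;> omega)

lemma d1 {n s : ℕ} (hq : p ^ s = 3 * n + 1) (i : ℕ) (hi : i < 3 * n) :
    VV p 1 ((n + 1/3 : ℚ) / (1 + i)) :=
  Qd3 hq _ (3 * i + 3) (by push_cast; ring) (by apply notdvd <;> omega)

lemma TA_VV {n s : ℕ} (hq : p ^ s = 3 * n + 1) : VV p 2 (TA n) :=
  VV.sum _ _ fun i hi => (d23 hq i (Finset.mem_range.mp hi)).pow 2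

lemma TB_VV {n s : ℕ} (hq : p ^ s = 3 * n + 1) : VV p 2 (TB n) :=
  VV.sum _ _ fun i hi => (d1 hq i (by have := Finset.mem_range.mp hi; omega)).pow 2

lemma A_VV (hp3 : ¬ p ∣ 3) (n : ℕ) : VV p 0 (poch (2/3) n / (n.factorial : ℚ)) := by
  have := cc_int hp3 2 n
  rw [Int.cast_ofNat] at this; exact this

theorem case1 {n s : ℕ} (hq : p ^ s = 3 * n + 1) (hs : 0 < s) (hn : 2 ≤ n) :
    VV p (s + 4) (∑ k ∈ Finset.range (n + 1), ff n k -
      (poch (2/3) n / (n.factorial : ℚ)) ^ 3 * ((3 * n + 1) + (3 * n + 1) * (TA n - TB n))) := by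
  have hp3 := three_not hq hs
  have hA := A_VV hp3 n
  set A := poch (2/3) n / (n.factorial : ℚ) with hAdef
  have hdou := dougall (-1/3 - n) (-1/3 - n) (-1/3 - n) (1/3) n
    (by have : (0 : ℚ) ≤ n := by positivity
        intro h; linarith)
    (fun j h => third_ne 2 (by norm_num) (-(n : ℚ) + j) (-n + j) (by push_cast; ring) (by rw [← h]; push_cast; ring))
    (fun j h => by have : (0 : ℚ) ≤ j := by positivity
                   linarith)
    (fun j h => by have : (0 : ℚ) ≤ j := by positivity
                   linarith)
    (fun j h => third_ne 1 (by norm_num) (-(n : ℚ) + j) (-n + j) (by push_cast; ring) (by rw [← h]; push_cast; ring))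
    (fun j h => by
      have h1 : (0 : ℚ) ≤ j := by positivity
      have h2 : (2 : ℚ) ≤ n := by exact_mod_cast hn
      linarith)
    (fun j h => by have : (0 : ℚ) ≤ j := by positivity
                   linarith)
  rw [DR1] at hdou
  have hsum : ∑ k ∈ Finset.range (n + 1), ff n k * (PP (1/3) (n + 1/3) k / PP (1/3 - n) (n + 1/3) k) =
      (3 * n + 1) * A ^ 3 * (PP 1 (n + 1/3) n / PP (2/3) (n + 1/3) n) := by
    rw [← hdou, Finset.mul_sum]
    exact Finset.sum_congr rfl fun k hk => ff1_dw n k (by have := Finset.mem_range.mp hk; omega)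
  have hquot : VV p 4 (PP 1 (n + 1/3) n / PP (2/3) (n + 1/3) n - (1 - TB n + TA n)) :=
    quot_exp (TB_VV hq) (TA_VV hq) (PP_exp _ _ _ fun i hi => d1 hq i (by omega))
      (PP_exp _ _ _ fun i hi => d23 hq i hi)
  have hdiff : VV p (s + 4) (∑ k ∈ Finset.range (n + 1),
      ff n k * (PP (1/3) (n + 1/3) k / PP (1/3 - n) (n + 1/3) k - 1)) := by
    refine VV.sum _ _ fun k hk => ?_
    have hk' : k ≤ n := by have := Finset.mem_range.mp hk; omega
    rcases Nat.eq_zero_or_pos k with rfl | hkp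
    · have : (PP (1/3) (n + 1/3) 0 / PP (1/3 - n) (n + 1/3) 0 - 1) = 0 := by simp [PP]
      rw [this, mul_zero]; exact VV.zero
    · refine ((ff1_bound hq hs k hkp hk').mul (t := 2) (quot_unit (by omega) (PP_unit _ _ _ ?_) (PP_unit _ _ _ ?_)))
      · intro i hi
        exact Qd3 hq _ (3 * i + 1) (by push_cast; ring) (by apply notdvd <;> omega)
      · intro i hi
        exact Qd3 hq _ (3 * i + 1 - 3 * n) (by push_cast; ring) (by apply notdvd <;> omega)
  have key := ((QVV hq).mul0 (hA.pow 3)).mul hquot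
  have := key.sub hdiff
  convert this using 1
  simp only [mul_sub, Finset.sum_sub_distrib, hsum]
  ring

end main2

section main3
variable {p : ℕ} [hpf : Fact p.Prime]

lemma two_not (hodd : Odd p) : ¬ p ∣ 2 := by
  intro h
  have h3 : p = 2 := (Nat.prime_dvd_prime_iff_eq hpf.out Nat.prime_two).mp h
  subst h3
  exact absurd hodd (by decide)

lemma ff2_dw (n k : ℕ) (hk : k ≤ 2 * n) :
    ff (3 * n) k * (PP (-1/3 - 3 * n) (n + 1/3) k / PP 1 (n + 1/3) k) =
    (9 * n + 1) * (poch (2/3) (3 * n) / ((3 * n).factorial : ℚ)) ^ 3 *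
      DW (-1/3 - 3 * n) (1/3) (1/3) (1/3) (1 + 2 * (-1/3 - 3 * n) - 1/3 - 1/3 - 1/3 + (2 * n : ℕ)) (2 * n) k := by
  have h1 := PP_eq (-1/3 - 3 * n) (n + 1/3) k (fun i _ h => by
    exact third_ne (-1) (by norm_num) (-3 * (n : ℚ) + i) (-3 * n + i) (by push_cast; ring)
      (by rw [← h]; push_cast; ring))
  have h2 := PP_eq 1 (n + 1/3) k (fun i _ => by positivity)
  unfold ff DW
  rw [FF_eq (3 * n) k (by omega)]
  push_cast
  have e1 : (1 + 2 * (-1/3 - 3 * n) - 1/3 - 1/3 - 1/3 + 2 * n : ℚ) = -1/3 - 3 * n - (n + 1/3) := by ring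
  have e2 : (-(2 * n : ℚ)) = -1/3 - 3 * n + (n + 1/3) := by ring
  have e3 : (1 + (-1/3 - 3 * n) - (-1/3 - 3 * n - (n + 1/3)) : ℚ) = 1 + (n + 1/3) := by ring
  have e4 : (1 + (-1/3 - 3 * n) + 2 * n : ℚ) = 1 - (n + 1/3) := by ring
  have e6 : (1 + (-1/3 - 3 * n) - 1/3 : ℚ) = 1/3 - 3 * n := by ring
  rw [e1, e3, e4, e6, e2]
  have e7 : (3 * (3 * n) + 1 - 6 * k : ℚ) = (9 * n + 1) * ((-1/3 - 3 * n + 2 * k) / (-1/3 - 3 * n)) := by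
    have : (-1/3 - 3 * n : ℚ) ≠ 0 := by have : (0 : ℚ) ≤ n := by positivity
                                        intro h; linarith
    rw [mul_div_assoc', eq_div_iff this]; ring
  rw [e7]
  have h1' : ∀ X : ℚ, X * poch (-1/3 - 3 * n - (n + 1/3)) k * poch (-1/3 - 3 * n + (n + 1/3)) k =
      X * (poch (-1/3 - 3 * n) k ^ 2 * PP (-1/3 - 3 * n) (n + 1/3) k) := by
    intro X; rw [← h1]; ring
  have h2' : ∀ X : ℚ, X * poch (1 + (n + 1/3)) k * poch (1 - (n + 1/3)) k =
      X * ((k.factorial : ℚ) ^ 2 * PP 1 (n + 1/3) k) := by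
    intro X; rw [← poch_one, ← h2]; ring
  rw [h1', h2']
  ring

lemma DR2 (n : ℕ) : (9 * n + 1) * (poch (2/3) (3 * n) / ((3 * n).factorial : ℚ)) ^ 3 *
    DR (-1/3 - 3 * n) (1/3) (1/3) (1/3) (2 * n) = (3 * n + 1) * (poch (2/3) n / (n.factorial : ℚ)) ^ 3 := by
  have hn0 : (0 : ℚ) ≤ n := by positivity
  have hsgn : ((-1 : ℚ)) ^ (2 * n) = 1 := by rw [pow_mul]; simp
  have hA : poch (2/3) (3 * n) = poch (2/3) n * poch (1/3 - 3 * n) (2 * n) := by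
    rw [show 3 * n = n + 2 * n by ring, poch_add, poch_reflect (2/3 + n), hsgn, one_mul]
    congr 2; push_cast; ring
  have hB : ((3 * n).factorial : ℚ) = n.factorial * poch (-3 * n) (2 * n) := by
    rw [← poch_one, ← poch_one, show 3 * n = n + 2 * n by ring, poch_add, poch_reflect (1 + n), hsgn, one_mul]
    congr 2; push_cast; ring
  have hB0 : poch (-3 * n) (2 * n) ≠ 0 := by
    intro h; rw [h, mul_zero] at hB
    exact absurd hB (by positivity)
  have hA0 : poch (1/3 - 3 * n) (2 * n) ≠ 0 := by
    intro h; rw [h, mul_zero] at hA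
    exact absurd hA (poch23_ne _)
  have hL0 : poch (-1/3 - 3 * n) (2 * n) ≠ 0 := poch_ne_zero _ _ fun i _ h =>
    third_ne (-1) (by norm_num) (-3 * (n : ℚ) + i) (-3 * n + i) (by push_cast; ring)
      (by rw [← h]; push_cast; ring)
  have hsh := poch_shift (-1/3 - 3 * n) (2 * n)
  unfold DR
  rw [hA, hB]
  have e1 : (1 + (-1/3 - 3 * n) - 1/3 - 1/3 - 1/3 : ℚ) = -1/3 - 3 * n := by ring
  have e2 : (1 + (-1/3 - 3 * n) - 1/3 - 1/3 : ℚ) = -3 * n := by ring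
  have e3 : (1 + (-1/3 - 3 * n) - 1/3 : ℚ) = 1/3 - 3 * n := by ring
  rw [e1, e2, e3]
  have hsh' : (9 * n + 1) * poch (1 + (-1/3 - 3 * n)) (2 * n) = (3 * n + 1) * poch (-1/3 - 3 * n) (2 * n) := by
    rw [add_comm 1]; push_cast at hsh; linarith
  generalize poch (1 + (-1/3 - 3 * n)) (2 * n) = a at *
  generalize poch (-1/3 - 3 * n) (2 * n) = b at *
  generalize poch (-3 * n) (2 * n) = c at *
  generalize poch (1/3 - 3 * n) (2 * n) = d at *
  field_simp
  linear_combination poch (2/3) n ^ 3 * hsh'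

lemma VV.div_two (hodd : Odd p) {r : ℕ} {x : ℚ} (hx : VV p r x) : VV p r (x / 2) := by
  have := hx.div_nat 2 (two_not hodd)
  push_cast at this; exact this

lemma q13 {n s : ℕ} (hq : p ^ s = 3 * n + 1) (i : ℕ) (hi : i < 3 * n) (hin : i ≠ n) :
    VV p 1 ((-(3 * n + 1) : ℚ) / (1/3 + i)) := by
  have : VV p 1 ((n + 1 / 3 : ℚ) / (1/3 + i)) :=
    Qd3 hq _ (3 * i + 1) (by push_cast; ring) (by apply notdvd <;> omega)
  have := ((VV.ofNat 3).mul0' this).neg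
  convert this using 1
  ring

lemma Vunit {n s : ℕ} (hq : p ^ s = 3 * n + 1) (hodd : Odd p) (k : ℕ) (hk : k ≤ 3 * n) {r : ℕ} {x : ℚ}
    (hx : VV p r x) : VV p r (x / ∏ i ∈ Finset.range k, (1 + (-(3 * n + 1) : ℚ) / (1/3 + i))) ∧
      ∏ i ∈ Finset.range k, (1 + (-(3 * n + 1) : ℚ) / (1/3 + i)) ≠ 0 := by
  by_cases hkn : k ≤ n
  · have : VV p 1 (∏ i ∈ Finset.range k, (1 + (-(3 * n + 1) : ℚ) / (1/3 + i)) - 1) :=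
      VV.prod1 _ _ fun i hi => by
        have := Finset.mem_range.mp hi
        exact q13 hq i (by omega) (by omega)
    exact ⟨hx.div_unit this, this.ne_zero⟩
  · have hmem : n ∈ Finset.range k := Finset.mem_range.mpr (by omega)
    rw [← Finset.mul_prod_erase _ _ hmem]
    have h2 : (1 + (-(3 * n + 1) : ℚ) / (1/3 + n)) = -2 := by
      have : (0 : ℚ) ≤ n := by positivity
      have : (1/3 + n : ℚ) ≠ 0 := by positivity
      field_simp; ring
    rw [h2]
    have : VV p 1 (∏ i ∈ (Finset.range k).erase n, (1 + (-(3 * n + 1) : ℚ) / (1/3 + i)) - 1) :=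
      VV.prod1 _ _ fun i hi => by
        have h' := Finset.mem_erase.mp hi
        have := Finset.mem_range.mp h'.2
        exact q13 hq i (by omega) h'.1
    refine ⟨?_, mul_ne_zero (by norm_num) this.ne_zero⟩
    have h3 := (VV.div_two hodd hx).neg.div_unit this
    convert h3 using 1
    rw [← div_div, div_neg]

lemma FFJ {n s : ℕ} (hq : p ^ s = 3 * n + 1) (hs : 0 < s) (hodd : Odd p) (k : ℕ) (hk : k ≤ 3 * n) :
    ∃ J : ℚ, VV p 0 J ∧ (2 * n < k → VV p 1 J) ∧
      FF (3 * n) k = J * ((3 * n + 1) / (3 * k + 1 - 3 * (3 * n + 1))) := by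
  have hp3 := three_not hq hs
  have hk0 : (k : ℚ) ≤ 3 * n := by exact_mod_cast hk
  have hn0 : (0 : ℚ) ≤ n := by positivity
  set V := ∏ i ∈ Finset.range k, (1 + (-(3 * n + 1) : ℚ) / (1/3 + i)) with hV
  have hV0 : V ≠ 0 := (Vunit hq hodd k hk (VV.one)).2
  have hc : ∀ j, VV p 0 (cc (2/3) j) := fun j => by
    have := cc_int hp3 2 j
    rw [Int.cast_ofNat] at this; exact this
  have hl : VV p 0 (cc (-1/3 - 3 * n) k) := by
    have := cc_int hp3 (-1 - 9 * n) k
    push_cast at this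
    convert this using 2; ring
  have hbase : ∀ {r}, VV p r (cc (-1/3 - 3 * n) k) →
      VV p r (-3 * cc (2/3) (3 * n + 1) * cc (-1/3 - 3 * n) k / V) := fun h =>
    (Vunit hq hodd k hk (VV.mul0' (VV.mul0 (VV.ofNat 3).neg (hc _)) h)).1
  refine ⟨-3 * cc (2/3) (3 * n + 1) * cc (-1/3 - 3 * n) k / V, hbase hl, ?_, ?_⟩
  · intro h2
    apply hbase
    have := cc_congr (p := p) s (-(n + 1/3)) (fun j hj hjs => by
        rw [neg_div]
        exact (Qd3 hq _ (3 * j) (by push_cast; ring) (by apply notdvd <;> omega)).neg)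
      (fun j => by
        have := cc_int hp3 (2 - 3 * n) j
        push_cast at this
        convert this using 2; ring) (2 * n) k (by omega)
    rw [cc_neg_eq_zero _ _ h2, sub_zero] at this
    convert this using 2
    push_cast; ring
  · rw [FF_eq _ _ hk]
    have hA : poch (2/3) (3 * n) / ((3 * n).factorial : ℚ) =
        cc (2/3) (3 * n + 1) * ((3 * n + 1) / (2/3 + 3 * n)) := by
      unfold cc
      rw [poch_succ, Nat.factorial_succ]
      push_cast
      have : (2/3 + 3 * n : ℚ) ≠ 0 := by positivity
      have : (3 * n + 1 : ℚ) ≠ 0 := by positivity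
      have := Nat.factorial_ne_zero (3 * n)
      field_simp
    have hw : (3 * k + 1 - 3 * (3 * n + 1) : ℚ) ≠ 0 := by intro h; linarith
    have hden : poch (1/3 - (3 * n : ℕ)) k = poch (1/3) k * V * (3 * k + 1 - 3 * (3 * n + 1)) / (3 * (-2/3 - 3 * n)) := by
      have h1 := poch_mulu (1/3) (-(3 * n + 1)) k (fun i _ => by positivity)
      have h2 := poch_shift (1/3 + -(3 * n + 1)) k
      rw [h1, ← hV] at h2
      have e : (1/3 + -(3 * n + 1) + 1 : ℚ) = 1/3 - (3 * n : ℕ) := by push_cast; ring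
      rw [e] at h2
      have : (-2/3 - 3 * n : ℚ) ≠ 0 := by intro h; linarith
      rw [eq_div_iff (by simpa using this)]
      linear_combination (-3) * h2
    rw [hA, hden]
    have hcc : cc (-1/3 - 3 * n) k = poch (-1/3 - (3 * n : ℕ)) k / k.factorial := by
      unfold cc; push_cast; rfl
    rw [hcc]
    have h13 := poch13_ne k
    have h5 : (2/3 + 3 * n : ℚ) ≠ 0 := by positivity
    have h6 : (-2/3 - 3 * n : ℚ) = - (2/3 + 3 * n) := by ring
    rw [h6]
    have := Nat.factorial_ne_zero k
    generalize (2/3 + 3 * n : ℚ) = y at *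
    generalize (3 * k + 1 - 3 * (3 * n + 1) : ℚ) = w at *
    field_simp

lemma ff2_bound {n s : ℕ} (hq : p ^ s = 3 * n + 1) (hs : 0 < s) (hodd : Odd p) (k : ℕ) (hk : k ≤ 3 * n)
    (hkn : k ≠ n) : VV p (s + 2) (ff (3 * n) k) ∧ (2 * n < k → VV p (s + 4) (ff (3 * n) k)) := by
  obtain ⟨J, hJ0, hJ1, hF⟩ := FFJ hq hs hodd k hk
  have hk0 : (k : ℚ) ≤ 3 * n := by exact_mod_cast hk
  have hw : (3 * k + 1 - 3 * (3 * n + 1) : ℚ) ≠ 0 := by intro h; linarith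
  have hqw : VV p 1 ((3 * n + 1 : ℚ) / (3 * k + 1 - 3 * (3 * n + 1))) :=
    Qdiv hq _ (3 * k + 1 - 3 * (3 * n + 1)) (by push_cast; ring) (by apply notdvd <;> omega)
  set w : ℚ := 3 * k + 1 - 3 * (3 * n + 1) with hwd
  have e : ff (3 * n) k = (3 * n + 1) * ((3 * n + 1 : ℚ) / w) ^ 2 * (-2 - 3 * ((3 * n + 1 : ℚ) / w)) * J ^ 3 := by
    unfold ff; rw [hF]
    have : (3 * (3 * n : ℕ) + 1 - 6 * k : ℚ) = -2 * w - 3 * (3 * n + 1) := by rw [hwd]; push_cast; ring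
    rw [this]
    field_simp
  have hb : VV p (s + 2) ((3 * n + 1) * ((3 * n + 1 : ℚ) / w) ^ 2 * (-2 - 3 * ((3 * n + 1 : ℚ) / w))) :=
    VV.mul0 ((QVV hq).mul (hqw.pow 2)) ((VV.ofNat 2).neg.sub (VV.mul0 (VV.ofNat 3) (hqw.mono (by omega))))
  rw [e]
  exact ⟨hb.mul0 (hJ0.pow 3), fun h => (hb.mul ((hJ1 h).pow 3)).mono (by omega)⟩

end main3

section main4
variable {p : ℕ} [hpf : Fact p.Prime]

lemma sum_refl (hodd : Odd p) {r n : ℕ} (f : ℕ → ℚ) (h : ∀ i < n, VV p r (f (n - 1 - i) + f i)) :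
    VV p r (∑ i ∈ Finset.range n, f i) := by
  have h1 := Finset.sum_range_reflect f n
  have h2 : VV p r (∑ i ∈ Finset.range n, (f (n - 1 - i) + f i)) :=
    VV.sum _ _ fun i hi => h i (Finset.mem_range.mp hi)
  rw [Finset.sum_add_distrib, h1] at h2
  have := h2.div_two hodd
  convert this using 1
  ring

lemma cast_refl {n i : ℕ} (hi : i < n) : ((n - 1 - i : ℕ) : ℚ) = n - 1 - i := by
  rw [Nat.cast_sub (by omega), Nat.cast_sub (by omega)]; norm_num

lemma pair_eq (d u u' c : ℚ) (hu : u ≠ 0) (hu' : u' ≠ 0) (h : u' + u = c * d) :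
    d / u' + d / u = c * (d / u' * (d / u)) := by
  field_simp
  linear_combination d * h

lemma rel_eq (d u v : ℚ) (hu : u ≠ 0) (hv : v ≠ 0) (h : v = u - 3 * d) :
    d / v = d / u + 3 * (d / u) * (d / v) := by
  field_simp
  linear_combination (-d) * h

/-- the pairing `t + t' = t t'` -/
lemma pair23 {n : ℕ} (i : ℕ) (hi : i < n) :
    (n + 1/3 : ℚ) / (2/3 + (n - 1 - i : ℕ)) + (n + 1/3 : ℚ) / (2/3 + i) =
     1 * ((n + 1/3 : ℚ) / (2/3 + (n - 1 - i : ℕ)) * ((n + 1/3 : ℚ) / (2/3 + i))) :=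
  pair_eq _ _ _ _ (by positivity) (by positivity) (by rw [cast_refl hi]; ring)

lemma s1_VV {n s : ℕ} (hq : p ^ s = 3 * n + 1) (hodd : Odd p) :
    VV p 2 (∑ i ∈ Finset.range n, (n + 1/3 : ℚ) / (2/3 + i)) := by
  apply sum_refl hodd
  intro i hi
  rw [pair23 i hi, one_mul]
  exact (d23 hq _ (by omega)).mul (d23 hq i hi)

lemma c3_VV {n s : ℕ} (hq : p ^ s = 3 * n + 1) (hodd : Odd p) :
    VV p 4 (∑ i ∈ Finset.range n, ((n + 1/3 : ℚ) / (2/3 + i)) ^ 3) := by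
  apply sum_refl hodd
  intro i hi
  have h := pair23 i hi
  have h1 := d23 hq (n - 1 - i) (by omega)
  have h2 := d23 hq i hi
  set t' := (n + 1/3 : ℚ) / (2/3 + (n - 1 - i : ℕ))
  set t := (n + 1/3 : ℚ) / (2/3 + i)
  have e : t' ^ 3 + t ^ 3 = (t' * t) ^ 3 - 3 * (t' * t) ^ 2 := by
    have : t' ^ 3 + t ^ 3 = (t' + t) ^ 3 - 3 * (t' * t) * (t' + t) := by ring
    rw [this, h]; ring
  rw [e]
  exact ((((h1.mul h2).pow 3).mono (by omega))).sub ((VV.ofNat 3).mul0' ((h1.mul h2).pow 2))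

lemma d13 {n s : ℕ} (hq : p ^ s = 3 * n + 1) (i : ℕ) (hi : i < n) :
    VV p 1 ((n + 1/3 : ℚ) / (1/3 + i)) :=
  Qd3 hq _ (3 * i + 1) (by push_cast; ring) (by apply notdvd <;> omega)

lemma s23_VV {n s : ℕ} (hq : p ^ s = 3 * n + 1) (hodd : Odd p) :
    VV p 2 (∑ i ∈ Finset.range n, (n + 1/3 : ℚ) / (1/3 + i) +
      ∑ i ∈ Finset.range (2 * n), (n + 1/3 : ℚ) / (1 + i)) := by
  rw [two_mul, Finset.sum_range_add, ← add_assoc]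
  refine VV.add ?_ ?_
  · rw [← Finset.sum_range_reflect, ← Finset.sum_add_distrib]
    refine VV.sum _ _ fun i hi => ?_
    have hi := Finset.mem_range.mp hi
    rw [pair_eq _ _ _ 1 (by positivity) (by positivity) (by rw [cast_refl hi]; ring), one_mul]
    exact (d13 hq _ (by omega)).mul (d1 hq i (by omega))
  · apply sum_refl hodd (fun i => (n + 1/3 : ℚ) / (1 + (n + i : ℕ)))
    intro i hi
    have e := pair_eq (n + 1/3) (1 + (n + i : ℕ)) (1 + (n + (n - 1 - i) : ℕ)) 3 (by positivity) (by positivity)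
      (by push_cast; rw [cast_refl hi]; ring)
    have k1 := d1 hq (n + (n - 1 - i)) (by omega)
    have k2 := d1 hq (n + i) (by omega)
    have k3 := VV.mul0' (VV.ofNat 3) (k1.mul k2)
    rw [← e] at k3
    exact k3

lemma FF_mid {n s : ℕ} (hq : p ^ s = 3 * n + 1) (hodd : Odd p) :
    ∃ R : ℚ, VV p 2 (R - 1) ∧ FF (3 * n) n = R * (poch (2/3) n / (n.factorial : ℚ)) := by
  set D : ℚ := 2 * (n + 1/3) with hD
  set X1 := ∏ i ∈ Finset.range n, (1 + D / (2/3 + i)) with hX1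
  set X2 := ∏ i ∈ Finset.range n, (1 + D / (1/3 + i)) with hX2
  set X3 := ∏ i ∈ Finset.range (2 * n), (1 + (-D) / (1 + i)) with hX3
  have e1 := poch_mulu (2/3) D n (fun i _ => by positivity)
  have e2 := poch_mulu (1/3) D n (fun i _ => by positivity)
  have e3 := poch_mulu 1 (-D) (2 * n) (fun i _ => by positivity)
  rw [← hX1] at e1
  rw [← hX2] at e2
  rw [← hX3, poch_one] at e3
  have two : VV p 0 (2 : ℚ) := VV.ofNat 2
  have t1 : ∀ i ∈ Finset.range n, VV p 1 (D / (2/3 + i)) := fun i hi => by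
    rw [hD, mul_div_assoc]; exact two.mul0' (d23 hq i (Finset.mem_range.mp hi))
  have t2 : ∀ i ∈ Finset.range n, VV p 1 (D / (1/3 + i)) := fun i hi => by
    rw [hD, mul_div_assoc]; exact two.mul0' (d13 hq i (Finset.mem_range.mp hi))
  have t3 : ∀ i ∈ Finset.range (2 * n), VV p 1 (-D / (1 + i)) := fun i hi => by
    rw [hD, neg_div, mul_div_assoc]
    exact (two.mul0' (d1 hq i (by have := Finset.mem_range.mp hi; omega))).neg
  have p1 := VV.prod2 _ _ t1
  have p2 := VV.prod2 _ _ t2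
  have p3 := VV.prod2 _ _ t3
  rw [← hX1] at p1
  rw [← hX2] at p2
  rw [← hX3] at p3
  have q1 := VV.prod1 _ _ t1
  have q2 := VV.prod1 _ _ t2
  have q3 := VV.prod1 _ _ t3
  rw [← hX1] at q1
  rw [← hX2] at q2
  rw [← hX3] at q3
  clear_value X1 X2 X3
  have m1 : ∑ i ∈ Finset.range n, D / (2/3 + i) = 2 * ∑ i ∈ Finset.range n, (n + 1/3 : ℚ) / (2/3 + i) := by
    rw [Finset.mul_sum]; exact Finset.sum_congr rfl fun i _ => by rw [hD, mul_div_assoc]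
  have m2 : ∑ i ∈ Finset.range n, D / (1/3 + i) = 2 * ∑ i ∈ Finset.range n, (n + 1/3 : ℚ) / (1/3 + i) := by
    rw [Finset.mul_sum]; exact Finset.sum_congr rfl fun i _ => by rw [hD, mul_div_assoc]
  have m3 : ∑ i ∈ Finset.range (2 * n), -D / (1 + i) =
      -2 * ∑ i ∈ Finset.range (2 * n), (n + 1/3 : ℚ) / (1 + i) := by
    rw [Finset.mul_sum]; exact Finset.sum_congr rfl fun i _ => by rw [hD]; ring
  rw [m1] at p1
  rw [m2] at p2
  rw [m3] at p3
  have h1 := s1_VV hq hodd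
  have h23 := s23_VV hq hodd
  refine ⟨X1 * X3 / X2, ?_, ?_⟩
  · have hx2 := q2.ne_zero
    have : X1 * X3 / X2 - 1 = (X1 * X3 - X2) / X2 := by field_simp
    rw [this]
    refine VV.div_unit ?_ q2
    have q13' : VV p 2 ((X1 - 1) * (X3 - 1)) := q1.mul q3
    have r1 := (p1.add p3).sub p2
    rw [Nat.mul_one] at r1
    have := (r1.add q13').add (two.mul0' (h1.sub h23))
    convert this using 1
    ring
  · unfold FF
    have hsgn : ((-1 : ℚ)) ^ (2 * n) = 1 := by rw [pow_mul]; simp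
    have a1 : 3 * n - n = 2 * n := by omega
    have a2 : poch (2/3) (2 * n) = ((2 * n).factorial : ℚ) * X3 := by
      rw [← e3, poch_reflect, hsgn, one_mul]
      congr 1; rw [hD]; push_cast; ring
    have a3 : poch (4/3) (3 * n) = poch (4/3) (2 * n) * (poch (2/3) n * X1) := by
      rw [← e1, show 3 * n = 2 * n + n by ring, poch_add]
      congr 2; rw [hD]; push_cast; ring
    have a4 : ((3 * n).factorial : ℚ) = ((2 * n).factorial : ℚ) * (poch (1/3) n * X2) := by
      rw [← e2, show 3 * n = 2 * n + n by ring, ← poch_one, ← poch_one, poch_add]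
      congr 2; rw [hD]; push_cast; ring
    rw [a1, a2, a3, a4]
    have := poch13_ne n
    have := poch43_ne (2 * n)
    have := Nat.factorial_ne_zero (2 * n)
    have := Nat.factorial_ne_zero n
    have := q2.ne_zero
    field_simp

lemma dL {n s : ℕ} (hq : p ^ s = 3 * n + 1) (i : ℕ) (hi : i < 2 * n) :
    VV p 1 ((n + 1/3 : ℚ) / (-1/3 - 3 * n + i)) :=
  Qd3 hq _ (3 * i - 1 - 9 * n) (by push_cast; ring) (by apply notdvd <;> omega)

lemma TL_VV {n s : ℕ} (hq : p ^ s = 3 * n + 1) (hodd : Odd p) :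
    VV p 4 (∑ i ∈ Finset.range n, ((n + 1/3 : ℚ) / (-1/3 - 3 * n + i)) ^ 2 - TA n) := by
  have h3 := (VV.ofNat (p := p) 6).mul0' (c3_VV hq hodd)
  have : VV p 4 (∑ i ∈ Finset.range n, (((n + 1/3 : ℚ) / (-1/3 - 3 * n + i)) ^ 2 -
      ((n + 1/3 : ℚ) / (2/3 + i)) ^ 2 - 6 * ((n + 1/3 : ℚ) / (2/3 + i)) ^ 3)) := by
    refine VV.sum _ _ fun i hi => ?_
    have hi := Finset.mem_range.mp hi
    have ht := d23 hq i hi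
    have ht' := dL hq i (by omega)
    have hne : (-1/3 - 3 * n + i : ℚ) ≠ 0 := fun h =>
      third_ne (-1) (by norm_num) (-3 * (n : ℚ) + i) (-3 * n + i) (by push_cast; ring)
      (by rw [← h]; push_cast; ring)
    have hne2 : (2/3 + i : ℚ) ≠ 0 := by positivity
    have hrel : (n + 1/3 : ℚ) / (-1/3 - 3 * n + i) = (n + 1/3 : ℚ) / (2/3 + i) +
       3 * ((n + 1/3 : ℚ) / (2/3 + i)) * ((n + 1/3 : ℚ) / (-1/3 - 3 * n + i)) := by
      have := rel_eq (n + 1/3) (2/3 + i) (-1/3 - 3 * n + i) hne2 hne (by ring)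
      exact this
    generalize (n + 1/3 : ℚ) / (-1/3 - 3 * n + i) = t' at *
    generalize (n + 1/3 : ℚ) / (2/3 + i) = t at *
    have e : t' ^ 2 - t ^ 2 - 6 * t ^ 3 = t ^ 3 * t' * (27 * (1 + t')) := by
      linear_combination (t' + t * (1 + 3 * t') + 3 * t ^ 2 * (2 + 3 * t')) * hrel
    rw [e]
    exact ((ht.pow 3).mul ht').mul0 ((VV.ofNat 27).mul0 (VV.one.add (ht'.mono (by omega))))
  have := this.add h3
  convert this using 1
  unfold TA
  rw [Finset.sum_sub_distrib, Finset.sum_sub_distrib, Finset.mul_sum]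
  ring

end main4

section main5
variable {p : ℕ} [hpf : Fact p.Prime]

theorem case2 {n s : ℕ} (hq : p ^ s = 3 * n + 1) (hs : 0 < s) (hodd : Odd p) :
    VV p (s + 4) (∑ k ∈ Finset.range (3 * n + 1), ff (3 * n) k -
      (poch (2/3) n / (n.factorial : ℚ)) ^ 3 * ((3 * n + 1) + (3 * n + 1) * (TA n - TB n))) := by
  have hp3 := three_not hq hs
  have hA := A_VV hp3 n
  have hDR := DR2 n
  set A := poch (2/3) n / (n.factorial : ℚ) with hAdef
  have hn0 : (0 : ℚ) ≤ n := by positivity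
  have hdou := dougall (-1/3 - 3 * n) (1/3) (1/3) (1/3) (2 * n)
    (by intro h; linarith)
    (fun j h => third_ne 2 (by norm_num) (-3 * (n : ℚ) + j) (-3 * n + j) (by push_cast; ring) (by rw [← h]; push_cast; ring))
    (fun j h => third_ne 1 (by norm_num) (-3 * (n : ℚ) + j) (-3 * n + j) (by push_cast; ring) (by rw [← h]; push_cast; ring))
    (fun j h => third_ne 1 (by norm_num) (-3 * (n : ℚ) + j) (-3 * n + j) (by push_cast; ring) (by rw [← h]; push_cast; ring))
    (fun j h => third_ne 1 (by norm_num) (-3 * (n : ℚ) + j) (-3 * n + j) (by push_cast; ring) (by rw [← h]; push_cast; ring))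
    (fun j h => third_ne 7 (by norm_num) (3 * (n : ℚ) - j) (3 * n - j) (by push_cast; ring)
      (by push_cast; linarith))
    (fun j h => third_ne (-2) (by norm_num) (-6 * (n : ℚ) + j) (-6 * n + j) (by push_cast; ring) (by rw [← h]; push_cast; ring))
  set g : ℕ → ℚ := fun k => PP (-1/3 - 3 * n) (n + 1/3) k / PP 1 (n + 1/3) k with hg
  have hsum : ∑ k ∈ Finset.range (2 * n + 1), ff (3 * n) k * g k = (3 * n + 1) * A ^ 3 := by
    rw [← hDR, ← hdou, Finset.mul_sum]
    exact Finset.sum_congr rfl fun k hk => ff2_dw n k (by have := Finset.mem_range.mp hk; omega)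
  have hgn : VV p 4 (g n - 1 + (TA n - TB n)) := by
    have h1 := TL_VV hq hodd
    have h2 : VV p 4 (g n - (1 - ∑ i ∈ Finset.range n, ((n + 1/3 : ℚ) / (-1/3 - 3 * n + i)) ^ 2 + TB n)) := by
      refine quot_exp ?_ (TB_VV hq) (PP_exp _ _ _ fun i hi => dL hq i (by omega))
        (PP_exp _ _ _ fun i hi => d1 hq i (by omega))
      exact VV.sum _ _ fun i hi => (dL hq i (by have := Finset.mem_range.mp hi; omega)).pow 2
    have := h2.sub h1
    convert this using 1
    ring
  obtain ⟨R, hR, hFR⟩ := FF_mid hq hodd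
  rw [← hAdef] at hFR
  have hffn : ff (3 * n) n = (3 * n + 1) * A ^ 3 * R ^ 3 := by
    unfold ff; rw [hFR]; push_cast; ring
  have hmem : n ∈ Finset.range (2 * n + 1) := Finset.mem_range.mpr (by omega)
  have hdiff : VV p (s + 4) (∑ k ∈ (Finset.range (2 * n + 1)).erase n, ff (3 * n) k * (g k - 1)) := by
    refine VV.sum _ _ fun k hk => ?_
    obtain ⟨hkn, hk2⟩ := Finset.mem_erase.mp hk
    have hk' := Finset.mem_range.mp hk2
    exact (ff2_bound hq hs hodd k (by omega) hkn).1.mul (t := 2) (quot_unit (by omega)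
      (PP_unit _ _ _ fun i hi => dL hq i (by omega)) (PP_unit _ _ _ fun i hi => d1 hq i (by omega)))
  have htail : VV p (s + 4) (∑ k ∈ Finset.range n, ff (3 * n) (2 * n + 1 + k)) := by
    refine VV.sum _ _ fun k hk => ?_
    have hk' := Finset.mem_range.mp hk
    exact (ff2_bound hq hs hodd _ (by omega) (by omega)).2 (by omega)
  have hsplit : ∑ k ∈ Finset.range (3 * n + 1), ff (3 * n) k =
      ∑ k ∈ Finset.range (2 * n + 1), ff (3 * n) k + ∑ k ∈ Finset.range n, ff (3 * n) (2 * n + 1 + k) := by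
    rw [show 3 * n + 1 = 2 * n + 1 + n by ring, Finset.sum_range_add]
  have hmain : ∑ k ∈ Finset.range (2 * n + 1), ff (3 * n) k * (g k - 1) =
      ff (3 * n) n * (g n - 1) + ∑ k ∈ (Finset.range (2 * n + 1)).erase n, ff (3 * n) k * (g k - 1) :=
    (Finset.add_sum_erase _ _ hmem).symm
  simp only [mul_sub, Finset.sum_sub_distrib, mul_one, hsum] at hmain
  simp only [mul_sub, Finset.sum_sub_distrib, mul_one] at hdiff
  have hR0 : VV p 0 R := by
    have := (hR.mono (t := 0) (by omega)).add VV.one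
    rwa [sub_add_cancel] at this
  have hR3 : VV p 2 (R ^ 3 - 1) := by
    have : R ^ 3 - 1 = (R - 1) * (R ^ 2 + R + 1) := by ring
    rw [this]
    exact hR.mul0 (((hR0.pow 2).add hR0).add VV.one)
  have hτ : VV p 2 (TA n - TB n) := (TA_VV hq).sub (TB_VV hq)
  have hb : VV p 4 (R ^ 3 * (g n - 1 + (TA n - TB n)) - (TA n - TB n) * (R ^ 3 - 1)) :=
    (VV.mul0' (hR0.pow 3) hgn).sub (hτ.mul hR3)
  have hkey := ((QVV hq).mul0 (hA.pow 3)).mul hb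
  have := (htail.sub hkey).sub hdiff
  convert this using 1
  rw [hsplit]
  rw [hffn] at hmain
  linear_combination (-1) * hmain

lemma pcong_of {m : ℕ} {a b : ℚ} (h : VV p m (a - b)) : pcong p m a b := by
  by_cases hab : a = b
  · exact Or.inl hab
  · right
    have h0 : a - b ≠ 0 := sub_ne_zero.mpr hab
    unfold VV at h
    rw [padicNorm.eq_zpow_of_nonzero h0, ← zpow_natCast, ← zpow_neg] at h
    have h1 : (1 : ℚ) < p := by exact_mod_cast hpf.out.one_lt
    have := (zpow_le_zpow_iff_right₀ h1).mp h
    omega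

lemma rhs_eq (n : ℕ) : (3 * (n : ℚ) + 1) ^ 2 * ∑ j ∈ Finset.Icc 1 n,
    (1 / (3 * (j : ℚ) - 1) ^ 2 - 1 / (3 * (j : ℚ)) ^ 2) = TA n - TB n := by
  have key : ∀ m : ℕ, (3 * (n : ℚ) + 1) ^ 2 * ∑ j ∈ Finset.Icc 1 m,
      (1 / (3 * (j : ℚ) - 1) ^ 2 - 1 / (3 * (j : ℚ)) ^ 2) =
      ∑ i ∈ Finset.range m, ((n + 1/3 : ℚ) / (2/3 + i)) ^ 2 -
      ∑ i ∈ Finset.range m, ((n + 1/3 : ℚ) / (1 + i)) ^ 2 := by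
    intro m
    induction m with
    | zero => simp
    | succ m ih =>
      rw [Finset.sum_Icc_succ_top (by omega), mul_add, ih, Finset.sum_range_succ, Finset.sum_range_succ]
      have e1 : (3 * ((m + 1 : ℕ) : ℚ) - 1) = 3 * (2/3 + m) := by push_cast; ring
      have e2 : (3 * ((m + 1 : ℕ) : ℚ)) = 3 * (1 + m) := by push_cast; ring
      rw [e1, e2]
      have h1 : (2/3 + m : ℚ) ≠ 0 := by positivity
      have h2 : (1 + m : ℚ) ≠ 0 := by positivity
      generalize (2/3 + m : ℚ) = a at *
      generalize (1 + m : ℚ) = b at *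
      field_simp
      ring
  exact key n

end main5

theorem stmt4 (p : ℕ) (hp : p.Prime) (hodd : Odd p) (s : ℕ) (hs : 0 < s)
    (hmod : p ^ s % 3 = 1)
    (m : ℕ) (hm : m = (p ^ s - 1) / 3 ∨ m = p ^ s - 1) :
    pcong p (s + 4)
      (∑ k ∈ Finset.range (m + 1),
        (6 * k + 1) * poch (1 / 3) k ^ 6 / (k.factorial : ℚ) ^ 6)
      (poch (2 / 3) ((p ^ s - 1) / 3) ^ 3 / poch 1 ((p ^ s - 1) / 3) ^ 3 *
        ((p : ℚ) ^ s + (p : ℚ) ^ (3 * s) *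
          ∑ j ∈ Finset.Icc 1 ((p ^ s - 1) / 3),
            (1 / (3 * (j : ℚ) - 1) ^ 2 - 1 / (3 * (j : ℚ)) ^ 2))) := by
  haveI : Fact p.Prime := ⟨hp⟩
  obtain ⟨n, hn⟩ : ∃ n, p ^ s = 3 * n + 1 := ⟨p ^ s / 3, by omega⟩
  have hn' : (p ^ s - 1) / 3 = n := by omega
  have hqodd : Odd (p ^ s) := hodd.pow
  have hgt : 1 < p ^ s := Nat.one_lt_pow hs.ne' hp.one_lt
  have hn2 : 2 ≤ n := by
    rw [hn] at hqodd hgt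
    rcases hqodd with ⟨c, hc⟩
    omega
  have hqQ : (p : ℚ) ^ s = 3 * n + 1 := by exact_mod_cast hn
  have hq3 : (p : ℚ) ^ (3 * s) = (3 * n + 1) * (3 * n + 1) ^ 2 := by
    rw [mul_comm, pow_mul, hqQ]; ring
  apply pcong_of
  rw [hn', hqQ, hq3, mul_assoc (3 * (n : ℚ) + 1), rhs_eq, poch_one, ← div_pow, bailey]
  rcases hm with hm | hm
  · rw [hm, hn']; exact case1 hn hs hn2
  · have : m = 3 * n := by omega
    rw [this]; exact case2 hn hs hodd
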